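/- arXiv:2505.23594 — 2 statements merged into one kernel-verified Lean document; each statement's English description precedes it below -/
import Mathlib

section
/- Let A be an m×n matrix with i.i.d. N(0,1) entries, m ≤ n. Let x_o ∈ ℝ^n have entries in [x_min, x_max] with 0 < x_min ≤ x_max, and let g map θ ∈ ℝ^k to ℝ^n with Lipschitz constant 1 and take values with entries in [x_min, x_max]. Let x̂ = g(θ̂) and x̃ = g(θ̃) with ‖θ̂ − θ̃‖₂ ≤ δ, and suppose Σ̂ = (A X̂² Aᵀ)^{-1}, Σ̃ = (A X̃² Aᵀ)^{-1}, Σ_o = (A X_o² Aᵀ)^{-1} exist, where X̂ = diag(x̂), X̃ = diag(x̃), X_o = diag(x_o). Let w₁,…,w_L be i.i.d. N(0, σ_w² I_n), independent of A, and y_ℓ = A X_o w_ℓ. Define h(Σ) = (1/(L σ_w²)) Σ_{ℓ=1}^L y_ℓᵀ (Σ − Σ_o) y_ℓ − Tr((Σ − Σ_o) Σ_o^{-1}). Then there is a constant C̃ > 0 (depending only on x_min, x_max) such that |h(Σ̃) − h(Σ̂)| ≤ C̃·n·δ with probability at least 1 − O(e^{−m/2} + e^{−Ln/8}). -/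
open MeasureTheory ProbabilityTheory Matrix

/-- The measure of an `m × n` random matrix (represented as `Fin m → Fin n → ℝ`)
with i.i.d. standard Gaussian entries. -/
noncomputable def gaussMatrixMeasure (m n : ℕ) : Measure (Fin m → Fin n → ℝ) :=
  Measure.pi fun _ => Measure.pi fun _ => gaussianReal 0 1

/-- The measure of `L` i.i.d. `N(0, σw² Iₙ)` Gaussian vectors in `ℝⁿ`. -/
noncomputable def iidGaussVecs (L n : ℕ) (σw : ℝ) : Measure (Fin L → Fin n → ℝ) :=
  Measure.pi fun _ => Measure.pi fun _ => gaussianReal 0 ⟨σw ^ 2, sq_nonneg σw⟩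

/-- The centered empirical quadratic form
`h(Σ(x)) = (1/(Lσw²)) ∑ₗ yₗᵀ (Σ(x) − Σ₀) yₗ − Tr((Σ(x) − Σ₀) Σ₀⁻¹)`, where
`Σ(x) = (A X² Aᵀ)⁻¹`, `Σ₀ = (A X₀² Aᵀ)⁻¹` and `yₗ = A X₀ wₗ`. -/
noncomputable def centeredQuadForm (m n L : ℕ) (σw : ℝ) (xo : Fin n → ℝ)
    (A : Matrix (Fin m) (Fin n) ℝ) (w : Fin L → Fin n → ℝ) (x : Fin n → ℝ) : ℝ :=
  let So := (A * (Matrix.diagonal xo) ^ 2 * Aᵀ)⁻¹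
  let dS := (A * (Matrix.diagonal x) ^ 2 * Aᵀ)⁻¹ - So
  (1 / ((L : ℝ) * σw ^ 2)) *
      ∑ ℓ, (A.mulVec ((Matrix.diagonal xo).mulVec (w ℓ))) ⬝ᵥ
        dS.mulVec (A.mulVec ((Matrix.diagonal xo).mulVec (w ℓ))) -
    (dS * So⁻¹).trace

/-!
In the coordinates of the noise vectors `w ℓ`, the form `h(Σ(x))` depends on `x` only through
`N(x) = Bᵀ (A X² Aᵀ)⁻¹ B` with `B = A X₀`. Gram matrices `A X² Aᵀ` are monotone in the weights `x²`,
and inversion is antitone for the Loewner order, so comparing weights entrywise compares the `N(x)`.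
Since `N(x₀)` is an orthogonal projection, `N(x) ≤ c` with `c = (xmax / xmin)²`, and if `x` and `y`
are within `δ` then `-ε ≤ N(x) - N(y) ≤ ε` with `ε = O(δ)`. Hence `|h(Σ(x)) - h(Σ(y))|` is at most
`ε (∑ ‖w ℓ‖² / (L σw²) + n)`, simultaneously for all signals. A Chernoff bound for the chi-square
variable `∑ ‖w ℓ‖² / σw²` makes this `O(n δ)`. The inverses exist almost surely: a proper subspace
is null for the Gaussian measure, so the rows of `A` are linearly independent when `m ≤ n`.
-/

section LoewnerOrder

open scoped ComplexOrder MatrixOrder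

theorem inv_le_inv_of_posDef {𝕜 n : Type*} [RCLike 𝕜] [Fintype n] [DecidableEq n]
    {P Q : Matrix n n 𝕜} (hP : P.PosDef) (hQ : Q.PosDef) (hPQ : P ≤ Q) : Q⁻¹ ≤ P⁻¹ := by
  -- Both inequalities are Schur complement conditions for the block matrix `[Q, 1; 1, P⁻¹]`.
  let := hQ.isUnit.invertible
  let := hP.inv.isUnit.invertible
  have h₁ := PosDef.fromBlocks₁₁ (A := Q) 1 P⁻¹ hQ
  have h₂ := PosDef.fromBlocks₂₂ Q 1 (D := P⁻¹) hP.inv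
  simp only [conjTranspose_one, Matrix.one_mul, Matrix.mul_one,
    nonsing_inv_nonsing_inv P ((isUnit_iff_isUnit_det P).1 hP.isUnit)] at h₁ h₂
  exact h₁.1 (h₂.2 hPQ)

theorem conjTranspose_mul_inv_mul_le_one {𝕜 m n : Type*} [RCLike 𝕜] [Fintype m] [Fintype n]
    [DecidableEq m] [DecidableEq n] {B : Matrix m n 𝕜} (hB : (B * Bᴴ).PosDef) :
    Bᴴ * (B * Bᴴ)⁻¹ * B ≤ 1 := by
  -- Both sides are Schur complements in the block matrix `[B Bᴴ, B; Bᴴ, 1]`.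
  let := hB.isUnit.invertible
  let : Invertible (1 : Matrix n n 𝕜) := invertibleOne
  have h₁ := PosDef.fromBlocks₁₁ B 1 hB
  have h₂ := PosDef.fromBlocks₂₂ (B * Bᴴ) B (D := 1) .one
  refine h₁.1 (h₂.2 ?_)
  simpa using PosSemidef.zero

variable {m n : Type*} [Fintype n] [DecidableEq n]

theorem dotProduct_mulVec_le_of_le_smul_one {N : Matrix n n ℝ} {ε : ℝ} (hN : N ≤ ε • 1)
    (v : n → ℝ) : v ⬝ᵥ N *ᵥ v ≤ ε * (v ⬝ᵥ v) := by
  have h := PosSemidef.dotProduct_mulVec_nonneg hN v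
  simpa [sub_mulVec, smul_mulVec] using h

theorem trace_le_of_le_smul_one {N : Matrix n n ℝ} {ε : ℝ} (hN : N ≤ ε • 1) :
    N.trace ≤ ε * Fintype.card n := by
  have h := PosSemidef.trace_nonneg hN
  simpa [trace_smul] using h

theorem abs_sum_dotProduct_mulVec_sub_trace_le {ι : Type*} [Fintype ι] {N : Matrix n n ℝ}
    {ε a : ℝ} (ha : 0 ≤ a) (hN : N ≤ ε • 1) (hN' : -N ≤ ε • 1) (w : ι → n → ℝ) :
    |a * ∑ ℓ, w ℓ ⬝ᵥ N *ᵥ w ℓ - N.trace| ≤ ε * (a * ∑ ℓ, w ℓ ⬝ᵥ w ℓ + Fintype.card n) := by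
  have quad_le : |a * ∑ ℓ, w ℓ ⬝ᵥ N *ᵥ w ℓ| ≤ a * ∑ ℓ, ε * (w ℓ ⬝ᵥ w ℓ) := by
    rw [abs_mul, abs_of_nonneg ha]
    gcongr
    refine (Finset.abs_sum_le_sum_abs _ _).trans (Finset.sum_le_sum fun ℓ _ => abs_le'.2 ?_)
    have h := dotProduct_mulVec_le_of_le_smul_one hN' (w ℓ)
    rw [neg_mulVec, dotProduct_neg] at h
    exact ⟨dotProduct_mulVec_le_of_le_smul_one hN (w ℓ), h⟩
  have trace_le : |N.trace| ≤ ε * Fintype.card n :=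
    abs_le'.2 ⟨trace_le_of_le_smul_one hN, trace_neg N ▸ trace_le_of_le_smul_one hN'⟩
  calc |a * ∑ ℓ, w ℓ ⬝ᵥ N *ᵥ w ℓ - N.trace|
      ≤ |a * ∑ ℓ, w ℓ ⬝ᵥ N *ᵥ w ℓ| + |N.trace| := abs_sub _ _
    _ ≤ a * ∑ ℓ, ε * (w ℓ ⬝ᵥ w ℓ) + ε * Fintype.card n := add_le_add quad_le trace_le
    _ = ε * (a * ∑ ℓ, w ℓ ⬝ᵥ w ℓ + Fintype.card n) := by rw [← Finset.mul_sum]; ring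

/-- The Gram matrix `A X² Aᵀ` of the rows of `A` with respect to the weights `x ^ 2`; the precision
matrix `Σ(x)` is its inverse. -/
def weightedGram (A : Matrix m n ℝ) (x : n → ℝ) : Matrix m m ℝ :=
  A * diagonal x ^ 2 * Aᵀ

theorem weightedGram_eq_mul_conjTranspose (A : Matrix m n ℝ) (x : n → ℝ) :
    weightedGram A x = A * diagonal x * (A * diagonal x)ᴴ := by
  simp [weightedGram, pow_two, Matrix.mul_assoc, -diagonal_mul_diagonal]

theorem weightedGram_le_smul [Finite m] (A : Matrix m n ℝ) {x y : n → ℝ} {c : ℝ}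
    (h : ∀ i, x i ^ 2 ≤ c * y i ^ 2) : weightedGram A x ≤ c • weightedGram A y := by
  have hdiag : (diagonal fun i => c * y i ^ 2 - x i ^ 2).PosSemidef :=
    .diagonal fun i => sub_nonneg.2 (h i)
  have hsub : c • weightedGram A y - weightedGram A x =
      A * (diagonal fun i => c * y i ^ 2 - x i ^ 2) * Aᴴ := by
    have : (diagonal fun i => c * y i ^ 2 - x i ^ 2) = c • diagonal y ^ 2 - diagonal x ^ 2 := by
      simp [diagonal_pow, ← diagonal_smul, diagonal_sub]
    simp [weightedGram, this, Matrix.mul_sub, Matrix.sub_mul]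
  exact Matrix.le_iff.2 (hsub ▸ hdiag.mul_mul_conjTranspose_same A)

theorem weightedGram_posDef [Finite m] {A : Matrix m n ℝ} (hA : LinearIndependent ℝ A.row)
    {x : n → ℝ} (hx : ∀ i, x i ≠ 0) : (weightedGram A x).PosDef := by
  have := Fintype.ofFinite m
  have hdiag : (diagonal fun i => x i ^ 2).PosDef := .diagonal fun i => sq_pos_of_ne_zero (hx i)
  have hG : weightedGram A x = A * (diagonal fun i => x i ^ 2) * Aᴴ := by
    simp [weightedGram, diagonal_pow]
    rfl
  exact hG ▸ hdiag.mul_mul_conjTranspose_same (vecMul_injective_iff.2 hA)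

variable [Fintype m] [DecidableEq m]

/-- The precision matrix `Σ(x)` in the coordinates of the noise vector: `y = A X₀ w` gives
`yᵀ Σ(x) y = wᵀ N w` for `N = whitenedPrecision A xo x`. -/
noncomputable def whitenedPrecision (A : Matrix m n ℝ) (xo x : n → ℝ) : Matrix n n ℝ :=
  (A * diagonal xo)ᴴ * (weightedGram A x)⁻¹ * (A * diagonal xo)

theorem whitenedPrecision_self_le_one {A : Matrix m n ℝ} (hA : LinearIndependent ℝ A.row)
    {xo : n → ℝ} (ho : ∀ i, xo i ≠ 0) : whitenedPrecision A xo xo ≤ 1 := by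
  have hG := weightedGram_eq_mul_conjTranspose A xo
  rw [whitenedPrecision, hG]
  exact conjTranspose_mul_inv_mul_le_one (hG ▸ weightedGram_posDef hA ho)

theorem whitenedPrecision_le_smul {A : Matrix m n ℝ} (hA : LinearIndependent ℝ A.row)
    {xo x y : n → ℝ} {c : ℝ} (hc : 0 < c) (hx : ∀ i, x i ≠ 0) (hy : ∀ i, y i ≠ 0)
    (h : ∀ i, y i ^ 2 ≤ c * x i ^ 2) :
    whitenedPrecision A xo x ≤ c • whitenedPrecision A xo y := by
  have hinv : (weightedGram A x)⁻¹ ≤ c • (weightedGram A y)⁻¹ := by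
    have hX := weightedGram_posDef hA hx
    have hscale : (c • weightedGram A x)⁻¹ = c⁻¹ • (weightedGram A x)⁻¹ :=
      inv_smul' _ (Units.mk0 c hc.ne') ((isUnit_iff_isUnit_det _).1 hX.isUnit)
    calc (weightedGram A x)⁻¹
        = c • (c • weightedGram A x)⁻¹ := by rw [hscale, smul_inv_smul₀ hc.ne']
      _ ≤ c • (weightedGram A y)⁻¹ :=
          smul_le_smul_of_nonneg_left (inv_le_inv_of_posDef (weightedGram_posDef hA hy)
            (hX.smul hc) (weightedGram_le_smul A h)) hc.le
  have hconj := PosSemidef.conjTranspose_mul_mul_same hinv (A * diagonal xo)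
  rw [Matrix.le_iff]
  convert hconj using 1
  simp [whitenedPrecision, Matrix.mul_sub, Matrix.sub_mul]

theorem whitenedPrecision_sub_le {A : Matrix m n ℝ} (hA : LinearIndependent ℝ A.row)
    {xo x y : n → ℝ} {t c : ℝ} (ht : 0 ≤ t) (hc : 0 < c)
    (ho : ∀ i, xo i ≠ 0) (hx : ∀ i, x i ≠ 0) (hy : ∀ i, y i ≠ 0)
    (hyx : ∀ i, y i ^ 2 ≤ (1 + t) * x i ^ 2) (hoy : ∀ i, xo i ^ 2 ≤ c * y i ^ 2) :
    whitenedPrecision A xo x - whitenedPrecision A xo y ≤ (t * c) • 1 := by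
  have hy_le : whitenedPrecision A xo y ≤ c • 1 :=
    (whitenedPrecision_le_smul hA hc hy ho hoy).trans
      (smul_le_smul_of_nonneg_left (whitenedPrecision_self_le_one hA ho) hc.le)
  calc whitenedPrecision A xo x - whitenedPrecision A xo y
      ≤ (1 + t) • whitenedPrecision A xo y - whitenedPrecision A xo y :=
        sub_le_sub_right (whitenedPrecision_le_smul hA (by positivity) hx hy hyx) _
    _ = t • whitenedPrecision A xo y := by rw [add_smul, one_smul, add_sub_cancel_left]
    _ ≤ t • c • 1 := smul_le_smul_of_nonneg_left hy_le ht
    _ = (t * c) • 1 := smul_smul _ _ _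

end LoewnerOrder

theorem centeredQuadForm_eq_whitenedPrecision {m n L : ℕ} (σw : ℝ) {xo : Fin n → ℝ}
    {A : Matrix (Fin m) (Fin n) ℝ} (hA : LinearIndependent ℝ A.row) (ho : ∀ i, xo i ≠ 0)
    (w : Fin L → Fin n → ℝ) (x : Fin n → ℝ) :
    centeredQuadForm m n L σw xo A w x =
      1 / (L * σw ^ 2) *
          ∑ ℓ, w ℓ ⬝ᵥ (whitenedPrecision A xo x - whitenedPrecision A xo xo) *ᵥ w ℓ -
        (whitenedPrecision A xo x - whitenedPrecision A xo xo).trace := by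
  set B := A * diagonal xo with hB
  set D := (weightedGram A x)⁻¹ - (weightedGram A xo)⁻¹ with hD
  have hsub : whitenedPrecision A xo x - whitenedPrecision A xo xo = Bᴴ * D * B := by
    simp only [whitenedPrecision, hD, Matrix.mul_sub, Matrix.sub_mul, hB]
  have hquad (v : Fin n → ℝ) : v ⬝ᵥ (Bᴴ * D * B) *ᵥ v = (B *ᵥ v) ⬝ᵥ D *ᵥ (B *ᵥ v) := by
    rw [← mulVec_mulVec, ← mulVec_mulVec, dotProduct_mulVec, vecMul_conjTranspose]
    simp
  have hdet : IsUnit (weightedGram A xo).det :=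
    (isUnit_iff_isUnit_det _).1 (weightedGram_posDef hA ho).isUnit
  have htrace : (Bᴴ * D * B).trace = (D * (weightedGram A xo)⁻¹⁻¹).trace := by
    rw [nonsing_inv_nonsing_inv _ hdet, weightedGram_eq_mul_conjTranspose, Matrix.mul_assoc,
      trace_mul_comm, Matrix.mul_assoc]
  rw [hsub, htrace]
  simp only [hquad, centeredQuadForm, mulVec_mulVec]
  rfl

section FullRank

theorem measure_pi_submodule_eq_zero {ι : Type*} [Fintype ι] (μ : ι → Measure ℝ)
    [∀ i, SigmaFinite (μ i)] [∀ i, NullSingletonClass (μ i)] {W : Submodule ℝ (ι → ℝ)}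
    (hW : W ≠ ⊤) : Measure.pi μ W = 0 := by
  classical
  obtain ⟨i, hi⟩ : ∃ i, Pi.single i (1 : ℝ) ∉ W := by
    by_contra! h
    refine hW (eq_top_iff.2 ?_)
    rw [← (Pi.basisFun ℝ ι).span_eq, Submodule.span_le]
    rintro _ ⟨j, rfl⟩
    simpa using h j
  -- Every line in direction `i` meets `W` in at most one point, so Fubini applies.
  have hline (x : ι → ℝ) : {a | Function.update x i a ∈ W}.Subsingleton := by
    intro a ha b hb
    by_contra hab
    have hsub : Function.update x i a - Function.update x i b = (a - b) • Pi.single i (1 : ℝ) := by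
      rw [← Function.update_sub, sub_self, ← Pi.single, ← Pi.single_smul, smul_eq_mul, mul_one]
    exact hi ((W.smul_mem_iff (sub_ne_zero.2 hab)).1 (hsub ▸ W.sub_mem ha hb))
  have hmeas : MeasurableSet (W : Set (ι → ℝ)) := W.closed_of_finiteDimensional.measurableSet
  have hmarginal : ∫⋯∫⁻_{i}, (W : Set (ι → ℝ)).indicator 1 ∂μ = ∫⋯∫⁻_{i}, 0 ∂μ := by
    ext x
    simp only [lmarginal_singleton, Pi.zero_apply, lintegral_zero]
    calc ∫⁻ a, (W : Set (ι → ℝ)).indicator 1 (Function.update x i a) ∂μ i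
        = μ i (Function.update x i ⁻¹' W) :=
          lintegral_indicator_one (hmeas.preimage (measurable_update x))
      _ = 0 := (hline x).measure_zero (μ i)
  rw [← lintegral_indicator_one hmeas,
    lintegral_eq_of_lmarginal_eq {i} (measurable_one.indicator hmeas) measurable_zero hmarginal]
  exact lintegral_zero

theorem ae_linearIndependent_pi {E : Type*} [NormedAddCommGroup E] [NormedSpace ℝ E]
    [FiniteDimensional ℝ E] [MeasurableSpace E] [BorelSpace E] {ν : Measure E} [SigmaFinite ν]
    (hν : ∀ W : Submodule ℝ E, W ≠ ⊤ → ν W = 0) {m : ℕ} (hm : m ≤ Module.finrank ℝ E) :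
    ∀ᵐ v ∂Measure.pi fun _ : Fin m => ν, LinearIndependent ℝ v := by
  induction m with
  | zero => exact ae_of_all _ fun v => linearIndependent_empty_type
  | succ m ih =>
    have := FiniteDimensional.proper_real E
    have hcons : MeasurePreserving (fun p : (Fin m → E) × E => (Fin.cons p.2 p.1 : Fin (m + 1) → E))
        ((Measure.pi fun _ => ν).prod ν) (Measure.pi fun _ => ν) := by
      convert (measurePreserving_piFinSuccAbove (fun _ : Fin (m + 1) => ν) 0).symm.comp
        Measure.measurePreserving_swap using 2
      simp [MeasurableEquiv.piFinSuccAbove, Fin.insertNthEquiv]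
    have hmeas : MeasurableSet {v : Fin (m + 1) → E | LinearIndependent ℝ v} :=
      isOpen_setOfPred_linearIndependent.measurableSet
    rw [← hcons.map_eq, ae_map_iff hcons.measurable.aemeasurable hmeas]
    refine (Measure.ae_prod_iff_ae_ae (hmeas.preimage hcons.measurable)).2 ?_
    filter_upwards [ih (by lia)] with v hv
    have hspan : Submodule.span ℝ (Set.range v) ≠ ⊤ := by
      intro h
      have hcard : Set.finrank ℝ (Set.range v) ≤ m := by simpa using finrank_range_le_card v
      rw [Set.finrank, h, finrank_top] at hcard
      lia
    filter_upwards [measure_eq_zero_iff_ae_notMem.1 (hν _ hspan)] with x hx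
    exact hv.finCons hx

theorem ae_linearIndependent_gaussMatrixMeasure {m n : ℕ} (hmn : m ≤ n) :
    ∀ᵐ A ∂gaussMatrixMeasure m n, LinearIndependent ℝ A :=
  have := nullSingletonClass_gaussianReal (μ := 0) one_ne_zero
  ae_linearIndependent_pi (fun _ => measure_pi_submodule_eq_zero _) (by simpa)

end FullRank

section ChiSquare

open scoped Real

theorem mgf_sq_gaussianReal {v : NNReal} {t : ℝ} (ht : 2 * v * t < 1) :
    mgf (fun x => x ^ 2) (gaussianReal 0 v) t = (√(1 - 2 * v * t))⁻¹ := by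
  obtain rfl | hv := eq_or_ne v 0
  · simp [mgf]
  have : (0 : ℝ) < v := NNReal.coe_pos.2 (pos_of_ne_zero hv)
  have hsub : 0 < 1 - 2 * v * t := sub_pos.2 ht
  calc mgf (fun x => x ^ 2) (gaussianReal 0 v) t
      = ∫ x, (√(2 * π * v))⁻¹ * Real.exp (-((1 - 2 * v * t) / (2 * v)) * x ^ 2) := by
        rw [mgf, integral_gaussianReal_eq_integral_smul hv]
        congr with x
        rw [gaussianPDFReal, smul_eq_mul, mul_assoc, ← Real.exp_add]
        congr 2
        field_simp
        ring
    _ = (√(2 * π * v))⁻¹ * √(π / ((1 - 2 * v * t) / (2 * v))) := by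
        rw [integral_const_mul, integral_gaussian]
    _ = (√(1 - 2 * v * t))⁻¹ := by
        rw [← Real.sqrt_inv, ← Real.sqrt_mul (by positivity), ← Real.sqrt_inv]
        congr 1
        field_simp

theorem mgf_sum_pi {ι E : Type*} [Fintype ι] [MeasurableSpace E] (μ : Measure E) [SigmaFinite μ]
    (f : E → ℝ) (t : ℝ) :
    mgf (fun w : ι → E => ∑ i, f (w i)) (Measure.pi fun _ => μ) t =
      mgf f μ t ^ Fintype.card ι := by
  simp only [mgf, Finset.mul_sum, Real.exp_sum]
  exact integral_fintype_prod_eq_pow (fun x => Real.exp (t * f x))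

instance isProbabilityMeasure_gaussMatrixMeasure (m n : ℕ) :
    IsProbabilityMeasure (gaussMatrixMeasure m n) := by
  unfold gaussMatrixMeasure
  infer_instance

theorem iidGaussVecs_eq_pi (L n : ℕ) {σw : ℝ} {v : NNReal} (hv : (v : ℝ) = σw ^ 2) :
    iidGaussVecs L n σw = Measure.pi fun _ => Measure.pi fun _ => gaussianReal 0 v := by
  obtain rfl : v = ⟨σw ^ 2, sq_nonneg σw⟩ := NNReal.eq hv
  rfl

instance isProbabilityMeasure_iidGaussVecs (L n : ℕ) (σw : ℝ) :
    IsProbabilityMeasure (iidGaussVecs L n σw) := by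
  rw [iidGaussVecs_eq_pi L n (Real.coe_toNNReal _ (sq_nonneg σw))]
  infer_instance

theorem mgf_sum_dotProduct_self_iidGaussVecs (L n : ℕ) {σw t : ℝ} (ht : 2 * σw ^ 2 * t < 1) :
    mgf (fun w => ∑ ℓ, w ℓ ⬝ᵥ w ℓ) (iidGaussVecs L n σw) t =
      (√(1 - 2 * σw ^ 2 * t))⁻¹ ^ (L * n) := by
  have hv := Real.coe_toNNReal (σw ^ 2) (sq_nonneg σw)
  rw [iidGaussVecs_eq_pi L n hv, mgf_sum_pi _ fun w : Fin n → ℝ => w ⬝ᵥ w]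
  simp only [dotProduct, ← pow_two]
  rw [mgf_sum_pi _ fun x : ℝ => x ^ 2, mgf_sq_gaussianReal (by rwa [hv]), hv, Fintype.card_fin,
    Fintype.card_fin, ← pow_mul, mul_comm n]

theorem iidGaussVecs_real_sum_dotProduct_self_ge_le (L n : ℕ) {σw t : ℝ} (ht₀ : 0 ≤ t)
    (ht : 2 * σw ^ 2 * t < 1) (s : ℝ) :
    (iidGaussVecs L n σw).real {w | s ≤ ∑ ℓ, w ℓ ⬝ᵥ w ℓ} ≤
      Real.exp (-t * s) * (√(1 - 2 * σw ^ 2 * t))⁻¹ ^ (L * n) := by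
  have hmgf := mgf_sum_dotProduct_self_iidGaussVecs L n ht
  have hsqrt : 0 < √(1 - 2 * σw ^ 2 * t) := Real.sqrt_pos.2 (sub_pos.2 ht)
  rw [← hmgf]
  refine measure_ge_le_exp_mul_mgf s ht₀ (.of_integral_ne_zero ?_)
  rw [← mgf, hmgf]
  exact (pow_pos (inv_pos.2 hsqrt) _).ne'

theorem iidGaussVecs_real_sum_dotProduct_self_ge_four_mul_le (L n : ℕ) {σw : ℝ} (hσ : σw ≠ 0) :
    (iidGaussVecs L n σw).real {w | 4 * (L * n * σw ^ 2) ≤ ∑ ℓ, w ℓ ⬝ᵥ w ℓ} ≤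
      Real.exp (-(L * n) / 8) := by
  -- The Chernoff parameter `(4 σw²)⁻¹` yields the bound `(√2 / e) ^ (L n)`.
  have ht : 2 * σw ^ 2 * (4 * σw ^ 2)⁻¹ = 1 / 2 := by field_simp; norm_num
  have hsqrt : (√(1 - 1 / 2))⁻¹ ≤ Real.exp (7 / 8) := by
    calc (√(1 - 1 / 2))⁻¹ = √2 := by rw [← Real.sqrt_inv]; norm_num
      _ ≤ 7 / 8 + 1 := Real.sqrt_le_iff.2 (by norm_num)
      _ ≤ Real.exp (7 / 8) := Real.add_one_le_exp _
  calc (iidGaussVecs L n σw).real {w | 4 * (L * n * σw ^ 2) ≤ ∑ ℓ, w ℓ ⬝ᵥ w ℓ}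
      ≤ Real.exp (-(4 * σw ^ 2)⁻¹ * (4 * (L * n * σw ^ 2))) * (√(1 - 1 / 2))⁻¹ ^ (L * n) := by
        have h := iidGaussVecs_real_sum_dotProduct_self_ge_le L n (by positivity)
          (ht.trans_lt one_half_lt_one) (4 * (L * n * σw ^ 2))
        rwa [ht] at h
    _ ≤ Real.exp (-(L * n)) * Real.exp (7 / 8) ^ (L * n) := by
        gcongr
        field_simp
        rfl
    _ = Real.exp (-(L * n) / 8) := by
        rw [← Real.exp_nat_mul, ← Real.exp_add]
        push_cast
        ring_nf

end ChiSquare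

section Comparison

theorem sq_le_one_add_mul_sq {a b d x y : ℝ} (ha : 0 < a) (hx : x ∈ Set.Icc a b)
    (hy : y ∈ Set.Icc a b) (hd : |x - y| ≤ d) : x ^ 2 ≤ (1 + 2 * b / a ^ 2 * d) * y ^ 2 := by
  have hd₀ : 0 ≤ d := (abs_nonneg _).trans hd
  have hb : 0 < b := ha.trans_le (hx.1.trans hx.2)
  have hy₁ : 1 ≤ y ^ 2 / a ^ 2 := (one_le_div₀ (by positivity)).2 (pow_le_pow_left₀ ha.le hy.1 2)
  calc x ^ 2 = y ^ 2 + (x - y) * (x + y) := by ring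
    _ ≤ y ^ 2 + d * (b + b) := by
        gcongr
        · exact add_nonneg (ha.le.trans hx.1) (ha.le.trans hy.1)
        · exact (le_abs_self _).trans hd
        · exact hx.2
        · exact hy.2
    _ ≤ y ^ 2 + d * (b + b) * (y ^ 2 / a ^ 2) := by
        refine add_le_add_right ?_ _
        exact le_mul_of_one_le_right (by positivity) hy₁
    _ = (1 + 2 * b / a ^ 2 * d) * y ^ 2 := by ring

theorem sq_le_div_sq_mul_sq {a b x y : ℝ} (ha : 0 < a) (hx : x ∈ Set.Icc a b)
    (hy : a ≤ y) : x ^ 2 ≤ (b / a) ^ 2 * y ^ 2 := by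
  rw [← mul_pow, div_mul_eq_mul_div]
  refine pow_le_pow_left₀ (ha.le.trans hx.1) (hx.2.trans ?_) 2
  exact (le_div_iff₀ ha).2 (mul_le_mul_of_nonneg_left hy (ha.le.trans (hx.1.trans hx.2)))

end Comparison

theorem abs_centeredQuadForm_sub_le {m n L : ℕ} (σw : ℝ) {xo x y : Fin n → ℝ}
    {A : Matrix (Fin m) (Fin n) ℝ} {t c : ℝ} (hA : LinearIndependent ℝ A.row)
    (ht : 0 ≤ t) (hc : 0 < c) (ho : ∀ i, xo i ≠ 0) (hx : ∀ i, x i ≠ 0) (hy : ∀ i, y i ≠ 0)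
    (hxy : ∀ i, x i ^ 2 ≤ (1 + t) * y i ^ 2) (hyx : ∀ i, y i ^ 2 ≤ (1 + t) * x i ^ 2)
    (hox : ∀ i, xo i ^ 2 ≤ c * x i ^ 2) (hoy : ∀ i, xo i ^ 2 ≤ c * y i ^ 2)
    (w : Fin L → Fin n → ℝ) :
    |centeredQuadForm m n L σw xo A w x - centeredQuadForm m n L σw xo A w y| ≤
      t * c * (1 / (L * σw ^ 2) * ∑ ℓ, w ℓ ⬝ᵥ w ℓ + n) := by
  have hle := whitenedPrecision_sub_le hA ht hc ho hx hy hyx hoy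
  have hge := whitenedPrecision_sub_le hA ht hc ho hy hx hxy hox
  rw [← neg_sub] at hge
  have h := abs_sum_dotProduct_mulVec_sub_trace_le (a := 1 / (L * σw ^ 2)) (by positivity) hle hge w
  rw [Fintype.card_fin] at h
  convert h using 2
  simp only [centeredQuadForm_eq_whitenedPrecision σw hA ho, sub_mulVec, dotProduct_sub,
    Finset.sum_sub_distrib, trace_sub]
  ring

theorem abs_centeredQuadForm_sub_le_of_mem_Icc {m n L : ℕ} {σw a b : ℝ} (hL : 0 < L)
    (hσ : σw ≠ 0) (ha : 0 < a) (hab : a ≤ b) {A : Matrix (Fin m) (Fin n) ℝ}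
    (hA : LinearIndependent ℝ A.row) {w : Fin L → Fin n → ℝ}
    (hw : ∑ ℓ, w ℓ ⬝ᵥ w ℓ ≤ 4 * (L * n * σw ^ 2)) {xo x y : Fin n → ℝ}
    (ho : ∀ i, xo i ∈ Set.Icc a b) (hx : ∀ i, x i ∈ Set.Icc a b) (hy : ∀ i, y i ∈ Set.Icc a b) :
    |centeredQuadForm m n L σw xo A w x - centeredQuadForm m n L σw xo A w y| ≤
      10 * b ^ 3 / a ^ 4 * n * dist x y := by
  have hb : 0 < b := ha.trans_le hab
  have hne {z : Fin n → ℝ} (hz : ∀ i, z i ∈ Set.Icc a b) (i : Fin n) : z i ≠ 0 :=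
    (ha.trans_le (hz i).1).ne'
  have hnoise : 1 / (L * σw ^ 2) * ∑ ℓ, w ℓ ⬝ᵥ w ℓ ≤ 4 * n := by
    rw [one_div_mul_eq_div, div_le_iff₀ (by positivity)]
    exact hw.trans_eq (by ring)
  calc |centeredQuadForm m n L σw xo A w x - centeredQuadForm m n L σw xo A w y|
      ≤ 2 * b / a ^ 2 * dist x y * (b / a) ^ 2 * (1 / (L * σw ^ 2) * ∑ ℓ, w ℓ ⬝ᵥ w ℓ + n) :=
        abs_centeredQuadForm_sub_le σw hA (by positivity) (by positivity) (hne ho) (hne hx) (hne hy)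
          (fun i => sq_le_one_add_mul_sq ha (hx i) (hy i) (dist_le_pi_dist x y i))
          (fun i => sq_le_one_add_mul_sq ha (hy i) (hx i) (dist_comm x y ▸ dist_le_pi_dist y x i))
          (fun i => sq_le_div_sq_mul_sq ha (ho i) (hx i).1)
          (fun i => sq_le_div_sq_mul_sq ha (ho i) (hy i).1) w
    _ ≤ 2 * b / a ^ 2 * dist x y * (b / a) ^ 2 * (4 * n + n) := by gcongr
    _ = 10 * b ^ 3 / a ^ 4 * n * dist x y := by ring

theorem centeredQuadForm_delta_error_general {m n L : ℕ} {σw xmin xmax : ℝ} (hL : 0 < L)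
    (hσ : σw ≠ 0) (hmin : 0 < xmin) (hmm : xmin ≤ xmax) {μ : Measure (Fin m → Fin n → ℝ)}
    [IsProbabilityMeasure μ] (hμ : ∀ᵐ A ∂μ, LinearIndependent ℝ A) :
    ENNReal.ofReal (1 - Real.exp (-(L * n) / 8)) ≤
      (μ.prod (iidGaussVecs L n σw)) {p | ∀ xo x y : Fin n → ℝ, (∀ i, xo i ∈ Set.Icc xmin xmax) →
        (∀ i, x i ∈ Set.Icc xmin xmax) → (∀ i, y i ∈ Set.Icc xmin xmax) →
        |centeredQuadForm m n L σw xo (Matrix.of p.1) p.2 x -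
            centeredQuadForm m n L σw xo (Matrix.of p.1) p.2 y| ≤
          10 * xmax ^ 3 / xmin ^ 4 * n * dist x y} := by
  set T : Set (Fin L → Fin n → ℝ) := {w | 4 * (L * n * σw ^ 2) ≤ ∑ ℓ, w ℓ ⬝ᵥ w ℓ}
  have hT : MeasurableSet T := by
    refine measurableSet_le measurable_const (Finset.measurable_sum _ fun ℓ _ => ?_)
    simp only [dotProduct]
    fun_prop
  calc ENNReal.ofReal (1 - Real.exp (-(L * n) / 8))
      ≤ ENNReal.ofReal ((iidGaussVecs L n σw).real Tᶜ) := by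
        rw [probReal_compl_eq_one_sub hT]
        gcongr
        exact iidGaussVecs_real_sum_dotProduct_self_ge_four_mul_le L n hσ
    _ = (μ.prod (iidGaussVecs L n σw)) (Set.univ ×ˢ Tᶜ) := by
        rw [ofReal_measureReal, Measure.prod_prod, measure_univ, one_mul]
    _ ≤ _ := by
        refine measure_mono_ae ?_
        filter_upwards [Measure.quasiMeasurePreserving_fst.ae hμ] with p hA hp
        have hw : ∑ ℓ, p.2 ℓ ⬝ᵥ p.2 ℓ ≤ 4 * (L * n * σw ^ 2) := le_of_not_ge hp.2
        exact fun xo x y => abs_centeredQuadForm_sub_le_of_mem_Icc hL hσ hmin hmm hA hw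

/-- With probability at least `1 − O(e^{−m/2} + e^{−Ln/8})` over the Gaussian matrix `A` and
the speckle vectors `w₁, …, w_L`, one has `|h(Σ̃) − h(Σ̂)| ≤ C̃ n δ`, where `x̂ = g(θ̂)`,
`x̃ = g(θ̃)`, `‖θ̂ − θ̃‖₂ ≤ δ`, `g` is `1`-Lipschitz with values whose entries lie in
`[x_min, x_max]`, and `C̃` depends only on `x_min, x_max`. -/
theorem centeredQuadForm_delta_error (xmin xmax : ℝ) (hmin : 0 < xmin) (hmm : xmin ≤ xmax) :
    ∃ Ct cO : ℝ, 0 < Ct ∧ 0 < cO ∧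
      ∀ (m n k L : ℕ) (σw δ : ℝ)
        (g : EuclideanSpace ℝ (Fin k) → EuclideanSpace ℝ (Fin n))
        (θh θt : EuclideanSpace ℝ (Fin k)),
        m ≤ n → 0 < m → 0 < L → 0 < σw →
        LipschitzWith 1 g →
        (∀ θ : EuclideanSpace ℝ (Fin k), ∀ i, g θ i ∈ Set.Icc xmin xmax) →
        dist θh θt ≤ δ →
        ∀ xo : Fin n → ℝ, (∀ i, xo i ∈ Set.Icc xmin xmax) →
        ENNReal.ofReal (1 - cO * (Real.exp (-(m : ℝ) / 2) + Real.exp (-((L : ℝ) * n) / 8))) ≤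
          ((gaussMatrixMeasure m n).prod (iidGaussVecs L n σw))
            {p | |centeredQuadForm m n L σw xo (Matrix.of p.1) p.2 (fun i => g θt i) -
                centeredQuadForm m n L σw xo (Matrix.of p.1) p.2 (fun i => g θh i)| ≤
              Ct * (n : ℝ) * δ} := by
  have hmax : 0 < xmax := hmin.trans_le hmm
  refine ⟨10 * xmax ^ 3 / xmin ^ 4, 1, by positivity, one_pos, ?_⟩
  intro m n k L σw δ g θh θt hmn _ hL hσ hg hbox hδ xo ho
  have hdist : dist (fun i => g θt i) (fun i => g θh i) ≤ δ := by
    refine (((PiLp.lipschitzWith_ofLp 2 _).comp hg).dist_le_mul θt θh).trans ?_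
    simpa [dist_comm] using hδ
  calc ENNReal.ofReal (1 - 1 * (Real.exp (-(m : ℝ) / 2) + Real.exp (-((L : ℝ) * n) / 8)))
      ≤ ENNReal.ofReal (1 - Real.exp (-(L * n) / 8)) :=
        ENNReal.ofReal_le_ofReal (by linarith [Real.exp_pos (-(m : ℝ) / 2)])
    _ ≤ _ := centeredQuadForm_delta_error_general hL hσ.ne' hmin hmm
        (ae_linearIndependent_gaussMatrixMeasure hmn)
    _ ≤ _ := by
        refine measure_mono fun p hp => (hp xo _ _ ho (hbox θt) (hbox θh)).trans ?_
        gcongr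
end

section
/- Let A be an m×n matrix with i.i.d. N(0,1) entries. For d ∈ ℝ^n let D = diag(d). Then for every t > 0, P( ‖A D Aᵀ‖_HS² ≤ m(m−1)·Σ_{i=1}^n d_i² − t ) ≤ 2C·exp( −c·min( t² / (C² ‖d‖_∞⁴ q_{m,n}), t / (C ‖d‖_∞² q̃_{m,n}) ) ) + 2e^{−n/2}, where q_{m,n} = m²(2√n + √m)⁴, q̃_{m,n} = (2√n + √m)², and C, c are the absolute constants from the decoupling inequality for U-processes and the Hanson–Wright inequality, respectively. -/
open MeasureTheory ProbabilityTheory Matrix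

/-- Squared Hilbert–Schmidt (Frobenius) norm `‖M‖_HS²`. -/
noncomputable def frobSq {m n : ℕ} (M : Matrix (Fin m) (Fin n) ℝ) : ℝ :=
  ∑ i, ∑ j, (M i j) ^ 2

/-- Entrywise sup-norm of a vector. -/
noncomputable def supNorm {n : ℕ} (v : Fin n → ℝ) : ℝ := ⨆ i, |v i|

/-!
Expose the rows `a₁, …, aₘ` of `A` one at a time. Apart from its diagonal, `A D Aᵀ` has squared norm
`2 ∑_{i<j} (aᵢᵀ D aⱼ)²`, and for fixed past rows the `j`-th increment is the quadratic form of
`∑_{i<j} (D aᵢ)(D aᵢ)ᵀ` at the Gaussian vector `aⱼ`. Its conditional mean `∑_{i<j} ‖D aᵢ‖²` is still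
random; adding `D²` to the matrix of the form once for each future row replaces these means by
constants, because row `i` is then charged `aᵢᵀ D² aᵢ = ‖D aᵢ‖²` once per future row as well. With
`Qⱼ ≽ 0` the compensated matrices, `m(m-1) ∑ dᵢ² - ‖A D Aᵀ‖²_HS ≤ 2 ∑ⱼ (tr Qⱼ - aⱼᵀ Qⱼ aⱼ)`.

For a positive semidefinite `Q` and `l ≥ 0` the exponential moment of
`l (tr Q - xᵀ Q x) - 4 l² tr Q²` over a standard Gaussian `x` is at most one, so
`exp (∑ⱼ (l (tr Qⱼ - aⱼᵀ Qⱼ aⱼ) - 4 l² tr Qⱼ²))` is an exponential supermartingale and has mean at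
most one: no decoupling is needed. A covering argument gives `‖A‖² ≤ 40 (n + m)`, hence
`∑ⱼ tr Qⱼ² ≤ (41 ‖d‖_∞² m (n + m))²`, off an event of probability `exp (-n / 2)`, and Markov's
inequality with the optimal `l` concludes.
-/

lemma lintegral_prod_le_one_of_lintegral_update_le_one {ι : Type*} [Fintype ι] [LinearOrder ι]
    {X : ι → Type*} [∀ i, MeasurableSpace (X i)] (μ : ∀ i, Measure (X i))
    [∀ i, IsProbabilityMeasure (μ i)] {f : ι → (∀ i, X i) → ENNReal}
    (hf : ∀ j, Measurable (f j)) (hdep : ∀ j, DependsOn (f j) (Set.Iic j))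
    (hle : ∀ j a, ∫⁻ x, f j (Function.update a j x) ∂μ j ≤ 1) :
    ∫⁻ a, ∏ j, f j a ∂Measure.pi μ ≤ 1 := by
  suffices ∀ s : Finset ι, ∫⁻ a, ∏ j ∈ s, f j a ∂Measure.pi μ ≤ 1 from this Finset.univ
  intro s
  induction s using Finset.induction_on_max with
  | empty => simp
  | insert j s hj ih =>
    have hj_notMem : j ∉ s := fun h => (hj j h).false
    refine le_trans (lintegral_le_of_lmarginal_le {j} (Finset.measurable_prod _ fun i _ => hf i)
      (Finset.measurable_prod _ fun i _ => hf i) fun a => ?_) ih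
    have hpast : ∀ x, ∏ i ∈ s, f i (Function.update a j x) = ∏ i ∈ s, f i a := fun x =>
      Finset.prod_congr rfl fun i hi => hdep i fun k hk =>
        Function.update_of_ne (ne_of_lt (lt_of_le_of_lt hk (hj i hi))) x a
    simp only [lmarginal_singleton, Finset.prod_insert hj_notMem, hpast]
    rw [lintegral_mul_const _ (by fun_prop), lintegral_const, measure_univ,
      mul_one]
    exact mul_le_of_le_one_left' (hle j a)

lemma lintegral_exp_sum_le_one {ι : Type*} [Fintype ι] [LinearOrder ι] {X : ι → Type*}
    [∀ i, MeasurableSpace (X i)] (μ : ∀ i, Measure (X i)) [∀ i, IsProbabilityMeasure (μ i)]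
    {H : ι → (∀ i, X i) → ℝ} (hH : ∀ j, Measurable (H j))
    (hdep : ∀ j, DependsOn (H j) (Set.Iic j))
    (hle : ∀ j a, ∫⁻ x, ENNReal.ofReal (Real.exp (H j (Function.update a j x))) ∂μ j ≤ 1) :
    ∫⁻ a, ENNReal.ofReal (Real.exp (∑ j, H j a)) ∂Measure.pi μ ≤ 1 := by
  simp_rw [Real.exp_sum, ENNReal.ofReal_prod_of_nonneg fun _ _ => Real.exp_nonneg _]
  exact lintegral_prod_le_one_of_lintegral_update_le_one μ (fun _ => by fun_prop)
    (fun _ a b hab => by rw [hdep _ hab]) hle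

lemma measure_le_exp_neg_of_lintegral_exp_le_one {Ω : Type*} [MeasurableSpace Ω] {μ : Measure Ω}
    {H : Ω → ℝ} (hH : Measurable H) (hle : ∫⁻ a, ENNReal.ofReal (Real.exp (H a)) ∂μ ≤ 1) (s : ℝ) :
    μ {a | s ≤ H a} ≤ ENNReal.ofReal (Real.exp (-s)) := by
  calc μ {a | s ≤ H a}
      = μ {a | ENNReal.ofReal (Real.exp s) ≤ ENNReal.ofReal (Real.exp (H a))} := by
        simp only [ENNReal.ofReal_le_ofReal_iff (Real.exp_nonneg _), Real.exp_le_exp]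
    _ ≤ (∫⁻ a, ENNReal.ofReal (Real.exp (H a)) ∂μ) / ENNReal.ofReal (Real.exp s) :=
        meas_ge_le_lintegral_div (by fun_prop) (by simp [Real.exp_pos]) ENNReal.ofReal_ne_top
    _ ≤ 1 / ENNReal.ofReal (Real.exp s) := by gcongr
    _ = ENNReal.ofReal (Real.exp (-s)) := by
        rw [one_div, Real.exp_neg, ENNReal.ofReal_inv_of_pos (Real.exp_pos s)]

lemma integral_exp_neg_mul_sq_gaussianReal {s : ℝ} (hs : -(1 / 2) < s) :
    ∫ x, Real.exp (-s * x ^ 2) ∂gaussianReal 0 1 = (√(1 + 2 * s))⁻¹ := by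
  have hdensity : ∀ x : ℝ, gaussianPDFReal 0 1 x • Real.exp (-s * x ^ 2) =
      (√(2 * Real.pi))⁻¹ * Real.exp (-(s + 1 / 2) * x ^ 2) := by
    intro x
    simp only [gaussianPDFReal, NNReal.coe_one, mul_one, sub_zero, smul_eq_mul]
    rw [mul_assoc, ← Real.exp_add]
    ring_nf
  have hpos : 0 < s + 1 / 2 := by linarith
  simp_rw [integral_gaussianReal_eq_integral_smul one_ne_zero, hdensity]
  rw [integral_const_mul, integral_gaussian, ← Real.sqrt_inv, ← Real.sqrt_inv,
    ← Real.sqrt_mul (by positivity), show 1 + 2 * s = 2 * (s + 1 / 2) by ring]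
  field_simp

lemma sub_mul_sq_le_log_one_add {s : ℝ} (hs : -(1 / 4) ≤ s) :
    2 * s - 8 * s ^ 2 ≤ Real.log (1 + 2 * s) := by
  have hpos : 0 < 1 + 2 * s := by linarith
  have hnonneg : 0 ≤ 1 + 4 * s := by linarith
  calc 2 * s - 8 * s ^ 2
      ≤ 2 * s - 8 * s ^ 2 + 4 * s ^ 2 * (1 + 4 * s) / (1 + 2 * s) :=
        le_add_of_nonneg_right (by positivity)
    _ = 1 - (1 + 2 * s)⁻¹ := by field_simp; ring
    _ ≤ Real.log (1 + 2 * s) := Real.one_sub_inv_le_log_of_pos hpos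

lemma inv_sqrt_one_add_le_exp {s : ℝ} (hs : -(1 / 4) ≤ s) :
    (√(1 + 2 * s))⁻¹ ≤ Real.exp (-s + 4 * s ^ 2) := by
  have hpos : 0 < 1 + 2 * s := by linarith
  rw [← Real.log_le_iff_le_exp (inv_pos.2 (Real.sqrt_pos.2 hpos)), Real.log_inv,
    Real.log_sqrt hpos.le]
  linarith [sub_mul_sq_le_log_one_add hs]

lemma lintegral_exp_sub_mul_sq_gaussianReal_le_one {s : ℝ} (hs : -(1 / 4) ≤ s) :
    ∫⁻ x, ENNReal.ofReal (Real.exp (s - s * x ^ 2 - 4 * s ^ 2)) ∂gaussianReal 0 1 ≤ 1 := by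
  have hvalue := integral_exp_neg_mul_sq_gaussianReal (show -(1 / 2) < s by linarith)
  have hpos : 0 < √(1 + 2 * s) := Real.sqrt_pos.2 (by linarith)
  have hint : Integrable (fun x => Real.exp (-s * x ^ 2)) (gaussianReal 0 1) :=
    .of_integral_ne_zero (hvalue ▸ (inv_pos.2 hpos).ne')
  have hsplit : ∀ x, Real.exp (s - s * x ^ 2 - 4 * s ^ 2) =
      Real.exp (s - 4 * s ^ 2) * Real.exp (-s * x ^ 2) := by
    intro x
    rw [← Real.exp_add]
    ring_nf
  simp_rw [hsplit]
  rw [← ofReal_integral_eq_lintegral_ofReal (hint.const_mul _) (ae_of_all _ fun x => by positivity),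
    integral_const_mul, hvalue, ENNReal.ofReal_le_one]
  calc Real.exp (s - 4 * s ^ 2) * (√(1 + 2 * s))⁻¹
      ≤ Real.exp (s - 4 * s ^ 2) * Real.exp (-s + 4 * s ^ 2) := by
        gcongr
        exact inv_sqrt_one_add_le_exp hs
    _ = 1 := by rw [← Real.exp_add, ← Real.exp_zero]; ring_nf

/-- The standard Gaussian distribution on `κ → ℝ`: i.i.d. `N(0,1)` coordinates. -/
noncomputable abbrev stdGaussianPi (κ : Type*) [Fintype κ] : Measure (κ → ℝ) :=
  Measure.pi fun _ => gaussianReal 0 1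

lemma lintegral_exp_sum_sub_mul_sq_stdGaussianPi_le_one {κ : Type*} [Fintype κ] {s : κ → ℝ}
    (hs : ∀ k, -(1 / 4) ≤ s k) :
    ∫⁻ x, ENNReal.ofReal (Real.exp (∑ k, (s k - s k * x k ^ 2 - 4 * s k ^ 2)))
      ∂stdGaussianPi κ ≤ 1 := by
  let _ : LinearOrder κ := LinearOrder.lift' (Fintype.equivFin κ) (Equiv.injective _)
  refine lintegral_exp_sum_le_one (H := fun k (x : κ → ℝ) => s k - s k * x k ^ 2 - 4 * s k ^ 2) _
    (fun k => by fun_prop) (fun k x y hxy => ?_) fun k x => ?_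
  · simp only [hxy k Set.self_mem_Iic]
  · simpa only [Function.update_self] using lintegral_exp_sub_mul_sq_gaussianReal_le_one (hs k)

lemma dotProduct_self_eq_norm_sq {κ : Type*} [Fintype κ] (x : EuclideanSpace ℝ κ) :
    x ⬝ᵥ x = ‖x‖ ^ 2 := by
  rw [EuclideanSpace.real_norm_sq_eq]
  simp only [dotProduct, sq]

lemma measurePreserving_mulVec_stdGaussianPi {κ : Type*} [Fintype κ] [DecidableEq κ]
    (U : unitaryGroup κ ℝ) :
    MeasurePreserving (fun x => (U : Matrix κ κ ℝ) *ᵥ x) (stdGaussianPi κ) (stdGaussianPi κ) := by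
  let T : EuclideanSpace ℝ κ ≃ₗᵢ[ℝ] EuclideanSpace ℝ κ :=
    Unitary.linearIsometryEquiv ⟨toEuclideanCLM (n := κ) (𝕜 := ℝ) U, Unitary.map_mem _ U.2⟩
  have hto : MeasurePreserving (WithLp.toLp 2) (stdGaussianPi κ)
      (stdGaussian (EuclideanSpace ℝ κ)) := ⟨by fun_prop, map_pi_eq_stdGaussian⟩
  have hT : MeasurePreserving T (stdGaussian (EuclideanSpace ℝ κ))
      (stdGaussian (EuclideanSpace ℝ κ)) := ⟨by fun_prop, stdGaussian_map T⟩
  exact (MeasurePreserving.symm (MeasurableEquiv.toLp 2 (κ → ℝ)) hto).comp (hT.comp hto)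

section Spectral

variable {κ : Type*} [Fintype κ] [DecidableEq κ] {M : Matrix κ κ ℝ}

lemma star_eigenvectorUnitary_mul_mul (hM : M.IsHermitian) :
    star (hM.eigenvectorUnitary : Matrix κ κ ℝ) * M * hM.eigenvectorUnitary =
      diagonal hM.eigenvalues := by
  rw [← Unitary.conjStarAlgAut_star_apply (S := ℝ)]
  exact hM.conjStarAlgAut_star_eigenvectorUnitary

lemma dotProduct_mulVec_eigenvectorUnitary (hM : M.IsHermitian) (x : κ → ℝ) :
    ((hM.eigenvectorUnitary : Matrix κ κ ℝ) *ᵥ x) ⬝ᵥ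
      (M *ᵥ ((hM.eigenvectorUnitary : Matrix κ κ ℝ) *ᵥ x)) = ∑ k, hM.eigenvalues k * x k ^ 2 := by
  set U : Matrix κ κ ℝ := ↑hM.eigenvectorUnitary
  calc (U *ᵥ x) ⬝ᵥ (M *ᵥ (U *ᵥ x))
      = x ⬝ᵥ ((star U * M * U) *ᵥ x) := by
        rw [star_eq_conjTranspose, conjTranspose_eq_transpose_of_trivial, mul_assoc,
          ← mulVec_mulVec, ← mulVec_mulVec, dotProduct_mulVec x, vecMul_transpose]
    _ = ∑ k, hM.eigenvalues k * x k ^ 2 := by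
        rw [star_eigenvectorUnitary_mul_mul]
        simp only [dotProduct, mulVec_diagonal]
        exact Finset.sum_congr rfl fun k _ => by ring

lemma trace_mul_self_eq_sum_eigenvalues_sq (hM : M.IsHermitian) :
    (M * M).trace = ∑ k, hM.eigenvalues k ^ 2 := by
  set U : Matrix κ κ ℝ := ↑hM.eigenvectorUnitary
  have hUU : U * star U = 1 := Unitary.mul_star_self_of_mem hM.eigenvectorUnitary.2
  calc (M * M).trace
      = (U * star U * M * (U * star U) * M).trace := by rw [hUU, one_mul, mul_one]
    _ = (star U * M * U * (star U * M * U)).trace := by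
        rw [mul_assoc U, mul_assoc U, mul_assoc U, trace_mul_comm U]
        simp only [mul_assoc]
    _ = ∑ k, hM.eigenvalues k ^ 2 := by
        rw [star_eigenvectorUnitary_mul_mul, diagonal_mul_diagonal, trace_diagonal]
        exact Finset.sum_congr rfl fun k _ => by ring

end Spectral

lemma lintegral_exp_trace_sub_quadForm_le_one {κ : Type*} [Fintype κ] {M : Matrix κ κ ℝ}
    (hM : M.IsHermitian) (hlow : ∀ x, -(1 / 4) * (x ⬝ᵥ x) ≤ x ⬝ᵥ (M *ᵥ x)) :
    ∫⁻ x, ENNReal.ofReal (Real.exp (M.trace - x ⬝ᵥ (M *ᵥ x) - 4 * (M * M).trace))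
      ∂stdGaussianPi κ ≤ 1 := by
  classical
  have heig : ∀ k, -(1 / 4) ≤ hM.eigenvalues k := by
    intro k
    have hunit : hM.eigenvectorBasis k ⬝ᵥ hM.eigenvectorBasis k = 1 := by
      rw [dotProduct_self_eq_norm_sq, hM.eigenvectorBasis.norm_eq_one, one_pow]
    simpa only [hM.eigenvalues_eq, star_trivial, RCLike.re_to_real, hunit, mul_one] using
      hlow (hM.eigenvectorBasis k)
  rw [← (measurePreserving_mulVec_stdGaussianPi hM.eigenvectorUnitary).lintegral_comp (by fun_prop)]
  simp only [dotProduct_mulVec_eigenvectorUnitary, hM.trace_eq_sum_eigenvalues,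
    trace_mul_self_eq_sum_eigenvalues_sq hM, Finset.mul_sum, RCLike.ofReal_real_eq_id, id,
    ← Finset.sum_sub_distrib]
  exact lintegral_exp_sum_sub_mul_sq_stdGaussianPi_le_one heig

section Net

open Metric Module

lemma packingNumber_one_closedBall_two_le (E : Type*) [NormedAddCommGroup E] [NormedSpace ℝ E]
    [FiniteDimensional ℝ E] : packingNumber 1 (closedBall (0 : E) 2) ≤ (5 ^ finrank ℝ E : ℕ) := by
  refine iSup₂_le fun s hs => iSup_le fun hsep => ?_
  by_contra! hcard
  obtain ⟨t, hts, ht⟩ := Set.exists_subset_encard_eq (Order.add_one_le_of_lt hcard)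
  have htfin : t.Finite :=
    Set.encard_ne_top_iff.1 (by rw [ht]; exact_mod_cast ENat.natCast_ne_top _)
  lift t to Finset E using htfin
  have htcard := Besicovitch.card_le_of_separated t
    (fun c hc => mem_closedBall_zero_iff.1 (hs (hts hc))) fun c hc c' hc' hne => by
      have h : (1 : ENNReal) < edist c c' := hsep (hts hc) (hts hc') hne
      rw [edist_dist, ENNReal.one_lt_ofReal, dist_eq_norm] at h
      exact h.le
  rw [Set.encard_coe_eq_coe_finsetCard] at ht
  norm_cast at ht
  omega

lemma exists_finset_isCover_closedBall (E : Type*) [NormedAddCommGroup E] [NormedSpace ℝ E]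
    [FiniteDimensional ℝ E] :
    ∃ N : Finset E, ↑N ⊆ closedBall (0 : E) 2 ∧ IsCover 1 (closedBall (0 : E) 2) ↑N ∧
      N.card ≤ 5 ^ finrank ℝ E := by
  have hcov : coveringNumber 1 (closedBall (0 : E) 2) ≤ (5 ^ finrank ℝ E : ℕ) :=
    (coveringNumber_le_packingNumber 1 _).trans (packingNumber_one_closedBall_two_le E)
  have htop : coveringNumber 1 (closedBall (0 : E) 2) ≠ ⊤ := ne_top_of_le_ne_top
    (ENat.natCast_ne_top _) hcov
  obtain ⟨N, hN⟩ :=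
    (finite_minimalCover (ε := 1) (A := closedBall (0 : E) 2)).exists_finset_coe
  refine ⟨N, hN ▸ minimalCover_subset, hN ▸ isCover_minimalCover htop, ?_⟩
  rw [← encard_minimalCover htop, ← hN, Set.encard_coe_eq_coe_finsetCard] at hcov
  exact_mod_cast hcov

lemma opNorm_le_of_isCover {E F : Type*} [NormedAddCommGroup E] [NormedSpace ℝ E]
    [NormedAddCommGroup F] [NormedSpace ℝ F] (T : E →L[ℝ] F) {N : Set E} {R : ℝ}
    (hN : IsCover 1 (closedBall (0 : E) 2) N) (hT : ∀ c ∈ N, ‖T c‖ ≤ R) : ‖T‖ ≤ R := by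
  have hR : 0 ≤ R := by
    obtain ⟨c, hc⟩ := hN.nonempty ⟨0, mem_closedBall_self zero_le_two⟩
    exact (norm_nonneg _).trans (hT c hc)
  suffices ‖T‖ ≤ (R + ‖T‖) / 2 by linarith
  refine T.opNorm_le_of_unit_norm (by positivity) fun y hy => ?_
  obtain ⟨c, hc, hyc⟩ := hN (show (2 : ℝ) • y ∈ closedBall (0 : E) 2 by
    simp [norm_smul, hy])
  have hdist : ‖(2 : ℝ) • y - c‖ ≤ 1 := by
    rw [← dist_eq_norm, ← ENNReal.ofReal_le_one, ← edist_dist]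
    exact hyc
  have h2 : 2 * ‖T y‖ ≤ R + ‖T‖ := calc
    2 * ‖T y‖ = ‖T c + T ((2 : ℝ) • y - c)‖ := by simp [norm_smul]
    _ ≤ ‖T c‖ + ‖T‖ * ‖(2 : ℝ) • y - c‖ := (norm_add_le _ _).trans (by gcongr; exact T.le_opNorm _)
    _ ≤ R + ‖T‖ := add_le_add (hT c hc) (mul_le_of_le_one_right (norm_nonneg _) hdist)
  linarith

end Net

/-- The distribution of a random matrix, given as its family of rows, with i.i.d. `N(0,1)`
entries. -/
noncomputable abbrev stdGaussianMatrix (ι κ : Type*) [Fintype ι] [Fintype κ] :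
    Measure (ι → κ → ℝ) :=
  Measure.pi fun _ => stdGaussianPi κ

section OperatorNorm

open scoped Matrix.Norms.L2Operator

variable {ι κ : Type*} [Fintype ι] [Fintype κ]

lemma lintegral_exp_dotProduct_sq_le_one {c : κ → ℝ} (hc : c ⬝ᵥ c ≤ 4) :
    ∫⁻ x, ENNReal.ofReal (Real.exp ((x ⬝ᵥ c) ^ 2 / 16 - 1 / 2)) ∂stdGaussianPi κ ≤ 1 := by
  classical
  set M : Matrix κ κ ℝ := -(1 / 16 : ℝ) • vecMulVec c c with hM
  have hform : ∀ x, x ⬝ᵥ (M *ᵥ x) = -(1 / 16) * (x ⬝ᵥ c) ^ 2 := by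
    intro x
    rw [hM, smul_mulVec, vecMulVec_mulVec, dotProduct_smul, dotProduct_smul, op_smul_eq_smul,
      dotProduct_comm c, smul_eq_mul, smul_eq_mul, sq]
  have htrace : M.trace = -(1 / 16) * (c ⬝ᵥ c) := by
    rw [hM, trace_smul, trace_vecMulVec, smul_eq_mul]
  have htrace_sq : (M * M).trace = (1 / 16 * (c ⬝ᵥ c)) ^ 2 := by
    rw [hM, smul_mul_smul_comm, vecMulVec_mul_vecMulVec, trace_smul, trace_vecMulVec,
      dotProduct_smul, smul_eq_mul, smul_eq_mul]
    ring
  have hHerm : M.IsHermitian := by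
    rw [hM, IsHermitian, conjTranspose_eq_transpose_of_trivial, transpose_smul,
      transpose_vecMulVec]
  have hc₀ : 0 ≤ c ⬝ᵥ c := by simpa using dotProduct_star_self_nonneg c
  have hcauchy : ∀ x, (x ⬝ᵥ c) ^ 2 ≤ (x ⬝ᵥ x) * (c ⬝ᵥ c) := fun x => by
    simpa only [dotProduct, sq] using Finset.sum_mul_sq_le_sq_mul_sq Finset.univ x c
  refine (lintegral_mono fun x => ?_).trans
    (lintegral_exp_trace_sub_quadForm_le_one hHerm fun x => ?_)
  · rw [hform, htrace, htrace_sq]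
    gcongr ENNReal.ofReal (Real.exp ?_)
    nlinarith
  · rw [hform]
    have hx₀ : 0 ≤ x ⬝ᵥ x := by simpa using dotProduct_star_self_nonneg x
    nlinarith [hcauchy x]

lemma measure_le_sum_dotProduct_sq_le {c : κ → ℝ} (hc : c ⬝ᵥ c ≤ 4) (r : ℝ) :
    stdGaussianMatrix ι κ {a | r ≤ ∑ i, (a i ⬝ᵥ c) ^ 2} ≤
      ENNReal.ofReal (Real.exp (Fintype.card ι / 2 - r / 16)) := by
  let _ : LinearOrder ι := LinearOrder.lift' (Fintype.equivFin ι) (Equiv.injective _)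
  let H : ι → (ι → κ → ℝ) → ℝ := fun i a => (a i ⬝ᵥ c) ^ 2 / 16 - 1 / 2
  have hmeas : ∀ i, Measurable (H i) := fun i => by
    simp only [H, dotProduct]
    fun_prop
  have hmgf : ∫⁻ a, ENNReal.ofReal (Real.exp (∑ i, H i a)) ∂stdGaussianMatrix ι κ ≤ 1 :=
    lintegral_exp_sum_le_one _ hmeas
      (fun i a b hab => by simp only [H, hab i Set.self_mem_Iic])
      fun i a => by
        simpa only [H, Function.update_self] using lintegral_exp_dotProduct_sq_le_one hc
  have hsum : ∀ a, ∑ i, H i a = (∑ i, (a i ⬝ᵥ c) ^ 2) / 16 - Fintype.card ι / 2 := fun a => by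
    simp only [H, Finset.sum_sub_distrib, Finset.sum_div, Finset.sum_const, Finset.card_univ,
      nsmul_eq_mul]
    ring
  calc stdGaussianMatrix ι κ {a | r ≤ ∑ i, (a i ⬝ᵥ c) ^ 2}
      ≤ stdGaussianMatrix ι κ {a | r / 16 - Fintype.card ι / 2 ≤ ∑ i, H i a} :=
        measure_mono fun a (ha : r ≤ _) => by
          rw [Set.mem_ofPred_eq, hsum]
          linarith
    _ ≤ ENNReal.ofReal (Real.exp (-(r / 16 - Fintype.card ι / 2))) :=
        measure_le_exp_neg_of_lintegral_exp_le_one (by fun_prop) hmgf _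
    _ = ENNReal.ofReal (Real.exp (Fintype.card ι / 2 - r / 16)) := by rw [neg_sub]

variable [DecidableEq κ]

lemma measure_lt_l2_opNorm_le {R : ℝ} (hR : 0 ≤ R) :
    stdGaussianMatrix ι κ {a | R < ‖of a‖} ≤ ENNReal.ofReal
      (5 ^ Fintype.card κ * Real.exp (Fintype.card ι / 2 - R ^ 2 / 16)) := by
  obtain ⟨N, hN, hcov, hcard⟩ := exists_finset_isCover_closedBall (EuclideanSpace ℝ κ)
  rw [finrank_euclideanSpace] at hcard
  have hsub : {a : ι → κ → ℝ | R < ‖of a‖} ⊆ ⋃ c ∈ N, {a | R ^ 2 ≤ ∑ i, (a i ⬝ᵥ c) ^ 2} := by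
    intro a ha
    by_contra! hcon
    simp only [Set.mem_iUnion, Set.mem_ofPred_eq, not_exists, not_le] at hcon
    refine (not_le.2 ha) (opNorm_le_of_isCover _ hcov fun c hc => le_of_sq_le_sq ?_ hR)
    rw [EuclideanSpace.real_norm_sq_eq]
    exact (hcon c hc).le
  have hpoint : ∀ c ∈ N, stdGaussianMatrix ι κ {a | R ^ 2 ≤ ∑ i, (a i ⬝ᵥ c) ^ 2} ≤
      ENNReal.ofReal (Real.exp (Fintype.card ι / 2 - R ^ 2 / 16)) := fun c hc => by
    refine measure_le_sum_dotProduct_sq_le ?_ _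
    have hnorm : ‖c‖ ≤ 2 := mem_closedBall_zero_iff.1 (hN hc)
    rw [dotProduct_self_eq_norm_sq]
    nlinarith [norm_nonneg c]
  calc stdGaussianMatrix ι κ {a | R < ‖of a‖}
      ≤ ∑ c ∈ N, stdGaussianMatrix ι κ {a | R ^ 2 ≤ ∑ i, (a i ⬝ᵥ c) ^ 2} :=
        (measure_mono hsub).trans (measure_biUnion_finset_le _ _)
    _ ≤ N.card • ENNReal.ofReal (Real.exp (Fintype.card ι / 2 - R ^ 2 / 16)) :=
        Finset.sum_le_card_nsmul _ _ _ hpoint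
    _ = ENNReal.ofReal (N.card * Real.exp (Fintype.card ι / 2 - R ^ 2 / 16)) := by
        rw [nsmul_eq_mul, ENNReal.ofReal_mul (by positivity), ENNReal.ofReal_natCast]
    _ ≤ _ := by
        gcongr
        exact_mod_cast hcard

lemma measure_lt_l2_opNorm_sq_le_exp :
    stdGaussianMatrix ι κ {a | 40 * ((Fintype.card κ : ℝ) + Fintype.card ι) < ‖of a‖ ^ 2} ≤
      ENNReal.ofReal (Real.exp (-(Fintype.card κ) / 2)) := by
  set n : ℝ := ↑(Fintype.card κ) with hn
  set m : ℝ := ↑(Fintype.card ι)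
  have hsq : √(40 * (n + m)) ^ 2 = 40 * (n + m) := Real.sq_sqrt (by positivity)
  calc stdGaussianMatrix ι κ {a | 40 * (n + m) < ‖of a‖ ^ 2}
      ≤ stdGaussianMatrix ι κ {a | √(40 * (n + m)) < ‖of a‖} :=
        measure_mono fun a ha =>
          (Real.sqrt_lt_sqrt (by positivity) ha).trans_eq (Real.sqrt_sq (norm_nonneg _))
    _ ≤ ENNReal.ofReal (5 ^ Fintype.card κ * Real.exp (m / 2 - √(40 * (n + m)) ^ 2 / 16)) :=
        measure_lt_l2_opNorm_le (Real.sqrt_nonneg _)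
    _ ≤ ENNReal.ofReal (Real.exp (-n / 2)) := by
        rw [hsq]
        gcongr
        have hfive : (5 : ℝ) ≤ Real.exp 2 := by
          linarith [Real.quadratic_le_exp_of_nonneg zero_le_two]
        calc 5 ^ Fintype.card κ * Real.exp (m / 2 - 40 * (n + m) / 16)
            ≤ Real.exp 2 ^ Fintype.card κ * Real.exp (m / 2 - 40 * (n + m) / 16) := by gcongr
          _ = Real.exp (2 * n + (m / 2 - 40 * (n + m) / 16)) := by
              rw [← Real.exp_nat_mul, ← Real.exp_add, hn, mul_comm 2]
          _ ≤ Real.exp (-n / 2) := by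
              gcongr
              have : 0 ≤ m := by positivity
              linarith

end OperatorNorm

section TraceBounds

open scoped Matrix.Norms.L2Operator

variable {κ : Type*} [Fintype κ] [DecidableEq κ] {M : Matrix κ κ ℝ}

lemma eigenvalues_le_l2_opNorm (hM : M.IsHermitian) (k : κ) : hM.eigenvalues k ≤ ‖M‖ := by
  have : Nonempty κ := ⟨k⟩
  exact (Real.le_norm_self _).trans
    (spectrum.norm_le_norm_of_mem (hM.eigenvalues_mem_spectrum_real k))

lemma trace_le_card_mul_l2_opNorm (hM : M.IsHermitian) : M.trace ≤ Fintype.card κ * ‖M‖ := by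
  rw [hM.trace_eq_sum_eigenvalues, ← nsmul_eq_mul, ← Finset.card_univ]
  exact Finset.sum_le_card_nsmul _ _ _ fun k _ => eigenvalues_le_l2_opNorm hM k

lemma trace_mul_self_le_l2_opNorm_mul_trace (hM : M.PosSemidef) :
    (M * M).trace ≤ ‖M‖ * M.trace := by
  rw [trace_mul_self_eq_sum_eigenvalues_sq hM.isHermitian,
    hM.isHermitian.trace_eq_sum_eigenvalues, Finset.mul_sum]
  refine Finset.sum_le_sum fun k _ => ?_
  rw [sq]
  exact mul_le_mul_of_nonneg_right (eigenvalues_le_l2_opNorm _ k) (hM.eigenvalues_nonneg k)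

end TraceBounds

lemma sum_sum_eq_two_mul_sum_sum_lt_add_sum_diag {ι : Type*} [Fintype ι] [LinearOrder ι]
    {G : ι → ι → ℝ} (hG : ∀ i j, G i j = G j i) :
    ∑ j, ∑ i, G i j = 2 * ∑ j, ∑ i with i < j, G i j + ∑ j, G j j := by
  have hsplit : ∀ i j, G i j = (if i < j then G i j else 0) + (if j < i then G j i else 0) +
      (if i = j then G i j else 0) := by
    intro i j
    rcases lt_trichotomy i j with h | rfl | h
    · simp [h, h.not_gt, h.ne]
    · simp
    · simp [h, h.not_gt, h.ne', hG i j]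
  calc ∑ j, ∑ i, G i j
      = ∑ j, ∑ i, (if i < j then G i j else 0) + ∑ j, ∑ i, (if j < i then G j i else 0) +
          ∑ j, ∑ i, (if i = j then G i j else 0) := by
        simp only [← Finset.sum_add_distrib, ← hsplit]
    _ = 2 * ∑ j, ∑ i with i < j, G i j + ∑ j, G j j := by
        rw [Finset.sum_comm (f := fun j i => if j < i then G j i else 0)]
        simp only [Finset.sum_filter, Finset.sum_ite_eq', Finset.mem_univ, if_true]
        ring

lemma sum_sq_le_card_mul_norm_sq {κ : Type*} [Fintype κ] (d : κ → ℝ) :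
    ∑ k, d k ^ 2 ≤ Fintype.card κ * ‖d‖ ^ 2 := by
  rw [← nsmul_eq_mul, ← Finset.card_univ]
  refine Finset.sum_le_card_nsmul _ _ _ fun k _ => ?_
  rw [← sq_abs]
  gcongr
  exact norm_le_pi_norm d k

section Compensated

open scoped Finset Matrix.Norms.L2Operator

variable {ι κ : Type*} [Fintype ι] [LinearOrder ι] [Fintype κ] [DecidableEq κ]

/-- The matrix `A D` with rows `a`, `D = diag(d)`, in which only the rows of index `< j` are kept
and the others are replaced by zero. -/
noncomputable def pastRows (d : κ → ℝ) (a : ι → κ → ℝ) (j : ι) : Matrix ι κ ℝ :=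
  diagonal (fun i => if i < j then (1 : ℝ) else 0) * of a * diagonal d

/-- The matrix of the quadratic form applied to row `j` in the exponential supermartingale: the
Gram matrix `∑ i < j, (D aᵢ)(D aᵢ)ᵀ` of the past rows, compensated by one copy of `D²` for each
future row. -/
noncomputable def compensatedGram (d : κ → ℝ) (a : ι → κ → ℝ) (j : ι) : Matrix κ κ ℝ :=
  (pastRows d a j)ᵀ * pastRows d a j + #{i | j < i} • diagonal d ^ 2

variable (d : κ → ℝ) (a : ι → κ → ℝ) (j : ι)

lemma pastRows_apply (i : ι) (k : κ) :
    pastRows d a j i k = if i < j then a i k * d k else 0 := by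
  simp [pastRows, diagonal_mul, mul_diagonal]

lemma dependsOn_compensatedGram : DependsOn (fun a => compensatedGram d a j) (Set.Iio j) := by
  intro a b hab
  have hrows : pastRows d a j = pastRows d b j := by
    ext i k
    simp only [pastRows_apply]
    split_ifs with hij
    · rw [hab i hij]
    · rfl
  simp only [compensatedGram, hrows]

lemma continuous_compensatedGram : Continuous fun a => compensatedGram d a j := by
  unfold compensatedGram pastRows
  fun_prop

lemma posSemidef_compensatedGram : (compensatedGram d a j).PosSemidef := by
  refine (posSemidef_conjTranspose_mul_self _).add (PosSemidef.smul ?_ (Nat.zero_le _))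
  rw [diagonal_pow]
  exact posSemidef_diagonal_iff.2 fun k => sq_nonneg (d k)

lemma trace_compensatedGram :
    (compensatedGram d a j).trace =
      ∑ i with i < j, ∑ k, (d k * a i k) ^ 2 + #{i | j < i} * ∑ k, d k ^ 2 := by
  rw [compensatedGram, trace_add, trace_smul, diagonal_pow, trace_diagonal, nsmul_eq_mul]
  congr 1
  simp only [trace, diag_apply, mul_apply, transpose_apply, pastRows_apply, Finset.sum_filter]
  rw [Finset.sum_comm]
  refine Finset.sum_congr rfl fun i _ => ?_
  split_ifs
  · exact Finset.sum_congr rfl fun k _ => by ring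
  · simp

lemma pastRows_mulVec (i : ι) :
    (pastRows d a j *ᵥ a j) i = if i < j then (of a * diagonal d * (of a)ᵀ) i j else 0 := by
  rw [mul_apply]
  simp only [mulVec, dotProduct, pastRows_apply, mul_diagonal, transpose_apply, of_apply]
  split_ifs <;> simp

lemma dotProduct_compensatedGram_mulVec :
    a j ⬝ᵥ (compensatedGram d a j *ᵥ a j) =
      ∑ i with i < j, ((of a * diagonal d * (of a)ᵀ) i j) ^ 2 +
        #{i | j < i} * ∑ k, (d k * a j k) ^ 2 := by
  rw [compensatedGram, add_mulVec, dotProduct_add, ← mulVec_mulVec, dotProduct_mulVec,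
    vecMul_transpose, smul_mulVec, dotProduct_smul, diagonal_pow, nsmul_eq_mul]
  congr 2
  · simp only [dotProduct, pastRows_mulVec, Finset.sum_filter]
    exact Finset.sum_congr rfl fun i _ => by split_ifs <;> ring
  · simp only [dotProduct, mulVec_diagonal, Pi.pow_apply]
    exact Finset.sum_congr rfl fun k _ => by ring

lemma sum_trace_sub_compensatedGram :
    ∑ j, ((compensatedGram d a j).trace - a j ⬝ᵥ (compensatedGram d a j *ᵥ a j)) =
      (Fintype.card ι * (Fintype.card ι - 1) / 2) * ∑ k, d k ^ 2 -
        ∑ j, ∑ i with i < j, ((of a * diagonal d * (of a)ᵀ) i j) ^ 2 := by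
  have hswap : ∀ r : ι → ℝ, ∑ j, ∑ i with i < j, r i = ∑ i, #{j | i < j} * r i := by
    intro r
    simp only [Finset.sum_filter]
    rw [Finset.sum_comm]
    simp only [← Finset.sum_filter, Finset.sum_const, nsmul_eq_mul]
  have hcount : ∑ j : ι, (#{i | j < i} : ℝ) = Fintype.card ι * (Fintype.card ι - 1) / 2 := by
    have hpairs := sum_sum_eq_two_mul_sum_sum_lt_add_sum_diag (ι := ι) (G := fun _ _ => 1)
      fun _ _ => rfl
    rw [hswap] at hpairs
    simp only [Finset.sum_const, Finset.card_univ, nsmul_eq_mul, mul_one] at hpairs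
    linarith
  simp only [trace_compensatedGram, dotProduct_compensatedGram_mulVec, Finset.sum_sub_distrib,
    Finset.sum_add_distrib, hswap fun i => ∑ k, (d k * a i k) ^ 2, ← Finset.sum_mul, hcount]
  ring

lemma l2_opNorm_pastRows_le : ‖pastRows d a j‖ ≤ ‖d‖ * ‖of a‖ := by
  have hmask : ‖fun i : ι => if i < j then (1 : ℝ) else 0‖ ≤ 1 :=
    (pi_norm_le_iff_of_nonneg zero_le_one).2 fun i => by split_ifs <;> simp
  calc ‖pastRows d a j‖
      ≤ ‖diagonal fun i : ι => if i < j then (1 : ℝ) else 0‖ * ‖of a‖ * ‖diagonal d‖ :=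
        (l2_opNorm_mul _ _).trans (by gcongr; exact l2_opNorm_mul _ _)
    _ ≤ 1 * ‖of a‖ * ‖d‖ := by
        rw [l2_opNorm_diagonal, l2_opNorm_diagonal]
        gcongr
    _ = ‖d‖ * ‖of a‖ := by ring

lemma l2_opNorm_compensatedGram_le :
    ‖compensatedGram d a j‖ ≤ ‖d‖ ^ 2 * (‖of a‖ ^ 2 + Fintype.card ι) := by
  calc ‖compensatedGram d a j‖
      ≤ ‖pastRows d a j‖ * ‖pastRows d a j‖ + #{i | j < i} • (‖d‖ ^ 2) := by
        refine (norm_add_le _ _).trans (add_le_add ?_ ?_)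
        · rw [← conjTranspose_eq_transpose_of_trivial, l2_opNorm_conjTranspose_mul_self]
        · refine (norm_nsmul_le).trans ?_
          rw [← l2_opNorm_diagonal d, ← nsmul_eq_mul]
          exact nsmul_le_nsmul_right (norm_pow_le' (diagonal d) two_pos) _
    _ ≤ (‖d‖ * ‖of a‖) * (‖d‖ * ‖of a‖) + Fintype.card ι • (‖d‖ ^ 2) := by
        gcongr
        · exact l2_opNorm_pastRows_le d a j
        · exact l2_opNorm_pastRows_le d a j
        · exact Finset.card_le_univ _
    _ = ‖d‖ ^ 2 * (‖of a‖ ^ 2 + Fintype.card ι) := by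
        rw [nsmul_eq_mul]
        ring

lemma trace_compensatedGram_le :
    (compensatedGram d a j).trace ≤
      Fintype.card ι * ‖d‖ ^ 2 * (‖of a‖ ^ 2 + Fintype.card κ) := by
  have hgram : ((pastRows d a j)ᵀ * pastRows d a j).trace ≤
      Fintype.card ι * (‖d‖ * ‖of a‖) ^ 2 := by
    rw [trace_mul_comm, ← conjTranspose_eq_transpose_of_trivial]
    refine (trace_le_card_mul_l2_opNorm (isHermitian_mul_conjTranspose_self _)).trans ?_
    gcongr
    refine (l2_opNorm_mul _ _).trans ?_
    rw [l2_opNorm_conjTranspose, ← sq]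
    gcongr
    exact l2_opNorm_pastRows_le d a j
  calc (compensatedGram d a j).trace
      ≤ Fintype.card ι * (‖d‖ * ‖of a‖) ^ 2 + Fintype.card ι * (Fintype.card κ * ‖d‖ ^ 2) := by
        rw [compensatedGram, trace_add, trace_smul, diagonal_pow, trace_diagonal, nsmul_eq_mul]
        refine add_le_add hgram (mul_le_mul (mod_cast Finset.card_le_univ _)
          (sum_sq_le_card_mul_norm_sq d) ?_ (by positivity))
        exact Finset.sum_nonneg fun k _ => sq_nonneg (d k)
    _ = Fintype.card ι * ‖d‖ ^ 2 * (‖of a‖ ^ 2 + Fintype.card κ) := by ring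

lemma sum_trace_mul_self_compensatedGram_le
    (ha : ‖of a‖ ^ 2 ≤ 40 * (Fintype.card κ + Fintype.card ι)) :
    ∑ j, (compensatedGram d a j * compensatedGram d a j).trace ≤
      (41 * (‖d‖ ^ 2 * (Fintype.card ι * (Fintype.card κ + Fintype.card ι)))) ^ 2 := by
  set m : ℝ := (Fintype.card ι : ℝ)
  set n : ℝ := (Fintype.card κ : ℝ)
  have hm : 0 ≤ m := Nat.cast_nonneg _
  have hn : 0 ≤ n := Nat.cast_nonneg _
  have hnorm : ∀ j, ‖compensatedGram d a j‖ ≤ ‖d‖ ^ 2 * (41 * (n + m)) := fun j =>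
    (l2_opNorm_compensatedGram_le d a j).trans (by gcongr; linarith)
  have htrace : ∀ j, (compensatedGram d a j).trace ≤ m * ‖d‖ ^ 2 * (41 * (n + m)) := fun j =>
    (trace_compensatedGram_le d a j).trans (by gcongr; linarith)
  calc ∑ j, (compensatedGram d a j * compensatedGram d a j).trace
      ≤ Fintype.card ι • (‖d‖ ^ 2 * (41 * (n + m)) * (m * ‖d‖ ^ 2 * (41 * (n + m)))) := by
        refine Finset.sum_le_card_nsmul _ _ _ fun j _ => ?_
        have hpsd := posSemidef_compensatedGram d a j
        exact (trace_mul_self_le_l2_opNorm_mul_trace hpsd).trans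
          (mul_le_mul (hnorm j) (htrace j) hpsd.trace_nonneg (by positivity))
    _ = (41 * (‖d‖ ^ 2 * (m * (n + m)))) ^ 2 := by
        rw [nsmul_eq_mul]
        ring

lemma half_le_sum_trace_sub_compensatedGram {t : ℝ}
    (ha : ∑ i, ∑ j, ((of a * diagonal d * (of a)ᵀ) i j) ^ 2 ≤
      Fintype.card ι * (Fintype.card ι - 1) * ∑ k, d k ^ 2 - t) :
    t / 2 ≤
      ∑ j, ((compensatedGram d a j).trace - a j ⬝ᵥ (compensatedGram d a j *ᵥ a j)) := by
  set S : Matrix ι ι ℝ := of a * diagonal d * (of a)ᵀ with hS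
  have hsymm : S.IsSymm := by
    rw [IsSymm, hS, transpose_mul, transpose_mul, transpose_transpose, diagonal_transpose,
      Matrix.mul_assoc]
  have hdiag : 0 ≤ ∑ j, S j j ^ 2 := Finset.sum_nonneg fun j _ => sq_nonneg _
  have hsymm_sq : ∀ i j, S i j ^ 2 = S j i ^ 2 := fun i j => by rw [hsymm.apply]
  rw [Finset.sum_comm, sum_sum_eq_two_mul_sum_sum_lt_add_sum_diag hsymm_sq] at ha
  rw [sum_trace_sub_compensatedGram]
  linarith

lemma measure_le_sum_compensatedGram {l : ℝ} (hl : 0 ≤ l) (s : ℝ) :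
    stdGaussianMatrix ι κ {a | s ≤ ∑ j,
      (l * ((compensatedGram d a j).trace - a j ⬝ᵥ (compensatedGram d a j *ᵥ a j)) -
        4 * l ^ 2 * (compensatedGram d a j * compensatedGram d a j).trace)} ≤
      ENNReal.ofReal (Real.exp (-s)) := by
  have hmeas : ∀ j : ι, Measurable fun a : ι → κ → ℝ =>
      l * ((compensatedGram d a j).trace - a j ⬝ᵥ (compensatedGram d a j *ᵥ a j)) -
        4 * l ^ 2 * (compensatedGram d a j * compensatedGram d a j).trace := by
    intro j
    have := continuous_compensatedGram d j
    exact Continuous.measurable (by fun_prop)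
  refine measure_le_exp_neg_of_lintegral_exp_le_one (Finset.measurable_sum _ fun j _ => hmeas j)
    (lintegral_exp_sum_le_one _ hmeas (fun j a b hab => ?_) fun j a => ?_) s
  · have hQ := dependsOn_compensatedGram d j fun i hi => hab i (Set.Iio_subset_Iic_self hi)
    beta_reduce at hQ
    rw [hQ, hab j Set.self_mem_Iic]
  · have hQ : ∀ x, compensatedGram d (Function.update a j x) j = compensatedGram d a j := fun x =>
      dependsOn_compensatedGram d j fun i hi => Function.update_of_ne (ne_of_lt hi) x a
    have hpsd := (posSemidef_compensatedGram d a j).smul hl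
    have hlow : ∀ x, -(1 / 4) * (x ⬝ᵥ x) ≤ x ⬝ᵥ ((l • compensatedGram d a j) *ᵥ x) := fun x =>
      (mul_nonpos_of_nonpos_of_nonneg (by norm_num) (dotProduct_self_star_nonneg x)).trans
        (hpsd.dotProduct_mulVec_nonneg x)
    refine le_of_eq_of_le (lintegral_congr fun x => ?_)
      (lintegral_exp_trace_sub_quadForm_le_one hpsd.isHermitian hlow)
    simp only [hQ, Function.update_self, trace_smul, smul_mulVec, dotProduct_smul,
      smul_mul_smul_comm, smul_eq_mul]
    ring_nf

end Compensated

open scoped Matrix.Norms.L2Operator in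
theorem ADA_frobenius_lower_tail_general {ι κ : Type*} [Fintype ι] [Fintype κ] [DecidableEq κ]
    (d : κ → ℝ) {t : ℝ} (ht : 0 ≤ t) :
    stdGaussianMatrix ι κ {a | ∑ i, ∑ j, ((of a * diagonal d * (of a)ᵀ) i j) ^ 2 ≤
        Fintype.card ι * (Fintype.card ι - 1) * ∑ k, d k ^ 2 - t} ≤
      ENNReal.ofReal (Real.exp (-(t / (328 *
          (‖d‖ ^ 2 * (Fintype.card ι * (Fintype.card κ + Fintype.card ι))))) ^ 2)) +
        ENNReal.ofReal (Real.exp (-(Fintype.card κ) / 2)) := by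
  let _ : LinearOrder ι := LinearOrder.lift' (Fintype.equivFin ι) (Equiv.injective _)
  set σ : ℝ := ‖d‖ ^ 2 * (Fintype.card ι * (Fintype.card κ + Fintype.card ι))
  -- `l` maximizes the right-hand side of `hexponent`; if `σ = 0` then `l = 0`, as `t / 0 = 0`.
  set l : ℝ := t / (16 * (41 * σ) ^ 2) with hl
  have hl0 : 0 ≤ l := by positivity
  have hexponent : (t / (328 * σ)) ^ 2 = l * (t / 2) - 4 * l ^ 2 * (41 * σ) ^ 2 := by
    rcases eq_or_ne σ 0 with h0 | h0
    · simp [hl, h0]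
    · rw [hl]
      field_simp
      ring
  refine (measure_mono fun a ha => ?_).trans ((measure_union_le _ _).trans (add_le_add
    (measure_le_sum_compensatedGram d hl0 _) (measure_lt_l2_opNorm_sq_le_exp (ι := ι) (κ := κ))))
  refine (le_or_gt (‖of a‖ ^ 2) (40 * (Fintype.card κ + Fintype.card ι))).imp (fun hnorm => ?_) id
  have htrace := sum_trace_mul_self_compensatedGram_le d a hnorm
  have hdev := half_le_sum_trace_sub_compensatedGram d a ha
  rw [Set.mem_ofPred_eq, hexponent, Finset.sum_sub_distrib, ← Finset.mul_sum, ← Finset.mul_sum]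
  gcongr

lemma supNorm_eq_norm {n : ℕ} (d : Fin n → ℝ) : supNorm d = ‖d‖ := by
  simp only [supNorm, Pi.norm_def, Finset.sup_univ_eq_ciSup, NNReal.coe_iSup, coe_nnnorm,
    Real.norm_eq_abs]

lemma add_le_two_mul_sqrt_add_sqrt_sq {m n : ℝ} (hm : 0 ≤ m) (hn : 0 ≤ n) :
    n + m ≤ (2 * √n + √m) ^ 2 := by
  calc n + m = √n ^ 2 + √m ^ 2 := by rw [Real.sq_sqrt hn, Real.sq_sqrt hm]
    _ ≤ √n ^ 2 + √m ^ 2 + (3 * √n ^ 2 + 4 * √n * √m) := le_add_of_nonneg_right (by positivity)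
    _ = (2 * √n + √m) ^ 2 := by ring

lemma sq_div_le_div_sq {m n : ℝ} (hm : 0 ≤ m) (hn : 0 ≤ n) (C D t : ℝ) :
    t ^ 2 / (C ^ 2 * D ^ 4 * (m ^ 2 * (2 * √n + √m) ^ 4)) ≤
      (t / (C * (D ^ 2 * (m * (n + m))))) ^ 2 := by
  rcases eq_or_ne (C * D ^ 2 * m) 0 with h0 | h0
  · have hden : C ^ 2 * D ^ 4 * (m ^ 2 * (2 * √n + √m) ^ 4) = 0 := by
      linear_combination C * D ^ 2 * m * (2 * √n + √m) ^ 4 * h0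
    rw [hden, div_zero]
    positivity
  · have hm_pos : 0 < m := hm.lt_of_ne' (right_ne_zero_of_mul h0)
    calc t ^ 2 / (C ^ 2 * D ^ 4 * (m ^ 2 * (2 * √n + √m) ^ 4))
        = t ^ 2 / ((C * D ^ 2 * m) ^ 2 * ((2 * √n + √m) ^ 2) ^ 2) := by ring_nf
      _ ≤ t ^ 2 / ((C * D ^ 2 * m) ^ 2 * (n + m) ^ 2) := by
          gcongr
          exact add_le_two_mul_sqrt_add_sqrt_sq hm hn
      _ = (t / (C * (D ^ 2 * (m * (n + m))))) ^ 2 := by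
          rw [div_pow]
          ring_nf

/-- Lower-tail bound for `‖A D Aᵀ‖_HS²` for a matrix `A` with i.i.d. `N(0,1)` entries and
`D = diag(d)`: there are absolute constants `C` (from the decoupling inequality) and `c`
(from the Hanson–Wright inequality) such that for every `t > 0`,
`P(‖A D Aᵀ‖_HS² ≤ m(m−1) ∑ dᵢ² − t)
  ≤ 2C exp(−c min(t²/(C²‖d‖_∞⁴ q_{m,n}), t/(C‖d‖_∞² q̃_{m,n}))) + 2e^{−n/2}`,
where `q_{m,n} = m²(2√n + √m)⁴` and `q̃_{m,n} = (2√n + √m)²`. -/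
theorem ADA_frobenius_lower_tail :
    ∃ C c : ℝ, 0 < C ∧ 0 < c ∧
      ∀ (m n : ℕ) (d : Fin n → ℝ) (t : ℝ), 0 < t →
        gaussMatrixMeasure m n
            {a | frobSq (Matrix.of a * Matrix.diagonal d * (Matrix.of a)ᵀ) ≤
              (m : ℝ) * ((m : ℝ) - 1) * (∑ i, (d i) ^ 2) - t} ≤
          ENNReal.ofReal (2 * C * Real.exp (-c *
              min (t ^ 2 / (C ^ 2 * (supNorm d) ^ 4 *
                    ((m : ℝ) ^ 2 * (2 * Real.sqrt n + Real.sqrt m) ^ 4)))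
                (t / (C * (supNorm d) ^ 2 * (2 * Real.sqrt n + Real.sqrt m) ^ 2)))) +
            ENNReal.ofReal (2 * Real.exp (-(n : ℝ) / 2)) := by
  refine ⟨328, 1, by norm_num, one_pos, fun m n d t ht => ?_⟩
  have htail := ADA_frobenius_lower_tail_general (ι := Fin m) d ht.le
  rw [Fintype.card_fin, Fintype.card_fin] at htail
  refine htail.trans (add_le_add (ENNReal.ofReal_le_ofReal ?_) (ENNReal.ofReal_le_ofReal ?_))
  · rw [supNorm_eq_norm]
    refine (Real.exp_le_exp.2 ?_).trans (le_mul_of_one_le_left (Real.exp_nonneg _) (by norm_num))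
    rw [neg_one_mul]
    exact neg_le_neg ((min_le_left _ _).trans (sq_div_le_div_sq m.cast_nonneg n.cast_nonneg _ _ _))
  · exact le_mul_of_one_le_left (Real.exp_nonneg _) one_le_two
end
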